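/- There exist constants c₀ > 0 and γ > 0 such that for every pair of complex numbers a, b, the Lebesgue measure of the set { x ∈ [0, 1/2] : |e^{2πix} − a x − b| > c₀ } is at least γ. -/

import Mathlib

/-!
A polynomial of degree at most `d` is annihilated by the forward difference of order `n = d + 1`
with any step `h`, whereas `e^{2πix}` is multiplied by `(e^{2πih} - 1) ^ n`, of nonzero modulus
when `0 < h < 1`. That difference combines the `n + 1` values at `x, x + h, …, x + n h` with
coefficients of total absolute value `2 ^ n`, so at one of these points `e^{2πix}` is far from the
polynomial. As `x` runs through an interval of length `h`, the set of such points must therefore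
have measure at least `h / (n + 1)`.
-/

open MeasureTheory Real Set Function
open scoped FourierTransform ENNReal NNReal

/-- `e2pi t = e^{2πit}`. -/
noncomputable def e2pi (t : ℝ) : ℂ := Complex.exp (2 * (Real.pi : ℂ) * Complex.I * (t : ℂ))

/-- Convolution of two functions on `ℝ`. -/
noncomputable def conv (f g : ℝ → ℂ) (x : ℝ) : ℂ := ∫ t, f t * g (x - t)

open scoped fwdDiff Polynomial
open Polynomial (C X natDegree_linear_le natDegree_comp_le natDegree_neg)

section ForwardDifference

variable {M : Type*} [AddCommMonoid M]

theorem norm_fwdDiff_iter_le_two_pow_mul {E : Type*} [SeminormedAddCommGroup E] {h : M} (n : ℕ)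
    {f : M → E} {x : M} {c : ℝ} (hf : ∀ k ≤ n, ‖f (x + k • h)‖ ≤ c) :
    ‖(Δ_[h])^[n] f x‖ ≤ 2 ^ n * c := by
  induction n generalizing f c with
  | zero => simpa using hf 0 le_rfl
  | succ n ih =>
    have hdiff : ∀ k ≤ n, ‖Δ_[h] f (x + k • h)‖ ≤ 2 * c := fun k hk => by
      have hsucc := hf (k + 1) (by lia)
      rw [succ_nsmul, ← add_assoc] at hsucc
      calc ‖Δ_[h] f (x + k • h)‖ ≤ ‖f (x + k • h + h)‖ + ‖f (x + k • h)‖ := norm_sub_le _ _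
        _ ≤ 2 * c := by linarith [hf k (by lia)]
    calc ‖(Δ_[h])^[n + 1] f x‖ ≤ 2 ^ n * (2 * c) := ih hdiff
      _ = 2 ^ (n + 1) * c := by ring

theorem fwdDiff_iter_eval_comp_eq_zero {R : Type*} [CommRing R] (φ : M →+ R) (h : M) {p : R[X]}
    {n : ℕ} (hp : p.natDegree < n) : (Δ_[h])^[n] (fun x => p.eval (φ x)) = 0 := by
  funext x
  set q : R[X] := p.comp (C (φ h) * X + C (φ x)) with hq
  have hdeg : q.natDegree < n :=
    calc q.natDegree ≤ p.natDegree * (C (φ h) * X + C (φ x)).natDegree := natDegree_comp_le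
      _ ≤ p.natDegree := mul_le_of_le_one_right' natDegree_linear_le
      _ < n := hp
  have hzero := congrFun (Polynomial.fwdDiff_iter_eq_zero_of_degree_lt hdeg) 0
  simpa [fwdDiff_iter_eq_sum_shift, hq, add_comm (φ x), mul_comm (φ h)] using hzero

end ForwardDifference

section Measure

variable {G : Type*} [MeasurableSpace G]

theorem measure_le_card_mul_of_subset_iUnion_preimage_add [AddGroup G] [MeasurableAdd G]
    (μ : Measure G) [μ.IsAddRightInvariant] {ι : Type*} (s : Finset ι) (g : ι → G) {A S : Set G}
    (hA : A ⊆ ⋃ i ∈ s, (· + g i) ⁻¹' S) : μ A ≤ s.card * μ S :=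
  calc μ A ≤ μ (⋃ i ∈ s, (· + g i) ⁻¹' S) := measure_mono hA
    _ ≤ ∑ i ∈ s, μ ((· + g i) ⁻¹' S) := measure_biUnion_finset_le _ _
    _ = s.card * μ S := by simp [measure_preimage_add_right]

theorem measure_le_mul_measure_lt_norm_of_lt_norm_fwdDiff_iter [AddCommGroup G] [MeasurableAdd G]
    (μ : Measure G) [μ.IsAddRightInvariant] {E : Type*} [SeminormedAddCommGroup E] {f : G → E}
    {h : G} {n : ℕ} {c : ℝ} {A B : Set G} (hAB : ∀ x ∈ A, ∀ k ≤ n, x + k • h ∈ B)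
    (hf : ∀ x ∈ A, 2 ^ n * c < ‖(Δ_[h])^[n] f x‖) :
    μ A ≤ (n + 1) * μ {x | x ∈ B ∧ c < ‖f x‖} := by
  have hcover : A ⊆ ⋃ k ∈ Finset.range (n + 1), (· + k • h) ⁻¹' {x | x ∈ B ∧ c < ‖f x‖} := by
    intro x hx
    obtain ⟨k, hk, hlt⟩ : ∃ k ≤ n, c < ‖f (x + k • h)‖ := by
      by_contra! hle
      exact (hf x hx).not_ge (norm_fwdDiff_iter_le_two_pow_mul n hle)
    exact mem_biUnion (Finset.mem_coe.2 (Finset.mem_range_succ_iff.2 hk)) ⟨hAB x hx k hk, hlt⟩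
  simpa using measure_le_card_mul_of_subset_iUnion_preimage_add μ _ _ hcover

end Measure

theorem ofReal_div_le_volume_lt_norm_of_lt_norm_fwdDiff_iter {E : Type*}
    [SeminormedAddCommGroup E] {f : ℝ → E} {α β h c : ℝ} {n : ℕ} (hh : 0 ≤ h)
    (hβ : α + (n + 1) * h ≤ β) (hf : ∀ x ∈ Icc α (α + h), 2 ^ n * c < ‖(Δ_[h])^[n] f x‖) :
    ENNReal.ofReal (h / (n + 1)) ≤ volume {x | x ∈ Icc α β ∧ c < ‖f x‖} := by
  have hmem : ∀ x ∈ Icc α (α + h), ∀ k ≤ n, x + k • h ∈ Icc α β := by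
    rintro x ⟨hαx, hxh⟩ k hk
    have hkh : k * h ≤ n * h := by gcongr
    rw [nsmul_eq_mul]
    exact ⟨le_add_of_le_of_nonneg hαx (by positivity), by linarith⟩
  have hvol := measure_le_mul_measure_lt_norm_of_lt_norm_fwdDiff_iter volume hmem hf
  rw [Real.volume_Icc, add_sub_cancel_left] at hvol
  rw [ENNReal.ofReal_div_of_pos (by positivity)]
  refine ENNReal.div_le_of_le_mul' (hvol.trans_eq ?_)
  norm_cast

theorem e2pi_eq_fourierChar (x : ℝ) : e2pi x = 𝐞 x := by
  rw [e2pi, fourierChar_apply]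
  push_cast
  ring_nf

theorem norm_e2pi (x : ℝ) : ‖e2pi x‖ = 1 := by
  rw [e2pi_eq_fourierChar, Circle.norm_coe]

theorem e2pi_eq_one_iff {x : ℝ} : e2pi x = 1 ↔ ∃ m : ℤ, x = m := by
  rw [e2pi, Complex.exp_eq_one_iff]
  refine exists_congr fun m => ?_
  rw [mul_comm (m : ℂ), mul_right_inj' Complex.two_pi_I_ne_zero]
  norm_cast

theorem e2pi_ne_one_of_pos_of_lt_one {x : ℝ} (h_pos : 0 < x) (h_lt : x < 1) : e2pi x ≠ 1 := by
  rw [Ne, e2pi_eq_one_iff]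
  rintro ⟨m, rfl⟩
  norm_cast at h_pos h_lt
  lia

theorem fwdDiff_iter_e2pi (h : ℝ) (n : ℕ) (x : ℝ) :
    (Δ_[h])^[n] e2pi x = (e2pi h - 1) ^ n * e2pi x := by
  have he : e2pi = Circle.coeHom.compAddChar 𝐞 := funext e2pi_eq_fourierChar
  rw [he, fwdDiff_addChar_eq]

theorem norm_fwdDiff_iter_e2pi_sub_eval {p : ℂ[X]} {n : ℕ} (hp : p.natDegree < n) (h x : ℝ) :
    ‖(Δ_[h])^[n] (fun y : ℝ => e2pi y - p.eval (y : ℂ)) x‖ = ‖e2pi h - 1‖ ^ n := by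
  have hneg : (Δ_[h])^[n] (fun y : ℝ => (-p).eval (y : ℂ)) = 0 :=
    fwdDiff_iter_eval_comp_eq_zero Complex.ofRealHom.toAddMonoidHom h (by rwa [natDegree_neg])
  have hsub : (fun y : ℝ => e2pi y - p.eval (y : ℂ)) = e2pi + fun y : ℝ => (-p).eval (y : ℂ) := by
    funext y
    simp [sub_eq_add_neg]
  rw [hsub, fwdDiff_iter_add, hneg, add_zero, fwdDiff_iter_e2pi, norm_mul, norm_pow, norm_e2pi,
    mul_one]

theorem statement17_general (d : ℕ) {α β : ℝ} (hαβ : α < β) :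
    ∃ c₀ : ℝ, 0 < c₀ ∧ ∃ γ : ℝ, 0 < γ ∧ ∀ p : ℂ[X], p.natDegree ≤ d →
      ENNReal.ofReal γ ≤
        volume {x : ℝ | x ∈ Set.Icc α β ∧ c₀ < ‖e2pi x - p.eval (x : ℂ)‖} := by
  set n := d + 1
  obtain ⟨h, h_pos, h_small⟩ : ∃ h : ℝ, 0 < h ∧ (n + 1) * h < min 1 (β - α) :=
    exists_pos_mul_lt (lt_min one_pos (sub_pos.2 hαβ)) _
  obtain ⟨h_one, h_fit⟩ := lt_min_iff.1 h_small
  have h_lt : h < 1 := (le_mul_of_one_le_left h_pos.le (by simp)).trans_lt h_one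
  have hdist : 0 < ‖e2pi h - 1‖ := norm_sub_pos_iff.2 (e2pi_ne_one_of_pos_of_lt_one h_pos h_lt)
  obtain ⟨c, c_pos, hc⟩ : ∃ c : ℝ, 0 < c ∧ 2 ^ n * c < ‖e2pi h - 1‖ ^ n :=
    exists_pos_mul_lt (pow_pos hdist n) _
  refine ⟨c, c_pos, h / (n + 1), by positivity, fun p hp => ?_⟩
  refine ofReal_div_le_volume_lt_norm_of_lt_norm_fwdDiff_iter h_pos.le (by linarith) fun x _ => ?_
  rwa [norm_fwdDiff_iter_e2pi_sub_eval (by lia)]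

/-- there are `c₀ > 0` and `γ > 0` such that for all complex `a, b` the set
`{x ∈ [0,1/2] : |e^{2πix} - ax - b| > c₀}` has Lebesgue measure at least `γ`. -/
theorem statement17 :
    ∃ c₀ : ℝ, 0 < c₀ ∧ ∃ γ : ℝ, 0 < γ ∧ ∀ a b : ℂ,
      ENNReal.ofReal γ ≤
        volume {x : ℝ | x ∈ Set.Icc (0:ℝ) (1/2) ∧ c₀ < ‖e2pi x - (a * (x : ℂ) + b)‖} := by
  obtain ⟨c, hc, γ, hγ, hvol⟩ := statement17_general 1 (α := 0) (β := 1 / 2) (by norm_num)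
  exact ⟨c, hc, γ, hγ, fun a b => by simpa using hvol (C a * X + C b) natDegree_linear_le⟩
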